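/- arXiv:2511.08611 — 8 statements merged into one kernel-verified Lean document; each statement's English description precedes it below -/
import Mathlib

section
/- Let G be a weakly connected directed multigraph with finite nonempty node set and finite arrow set. If G admits a marking that is both live and safe, then G is strongly connected. -/
open Classical

variable {V A : Type}

/-- A directed path from `v` to `w`: a nonempty list of arrows chained
head-to-tail, starting at `v` and ending at `w`. -/
def PathFrom (s t : A → V) (v w : V) (p : List A) : Prop :=
  List.Chain' (fun a b => t a = s b) p ∧
    (p.map s).head? = some v ∧ (p.map t).getLast? = some w

/-- A directed circuit: a nonempty directed path that returns to its start. -/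
def IsCircuit (s t : A → V) (p : List A) : Prop :=
  ∃ v : V, PathFrom s t v v p

/-- Strong connectivity: a directed path between every ordered pair of
distinct nodes. -/
def StronglyConnected (s t : A → V) : Prop :=
  ∀ v w : V, v ≠ w → ∃ p : List A, PathFrom s t v w p

/-- Adjacency ignoring arrow direction. -/
def WeakAdj (s t : A → V) (v w : V) : Prop :=
  ∃ a : A, (s a = v ∧ t a = w) ∨ (s a = w ∧ t a = v)

/-- Weak connectivity: every pair of nodes is joined by an undirected path. -/
def WeaklyConnected (s t : A → V) : Prop :=
  ∀ v w : V, Relation.ReflTransGen (WeakAdj s t) v w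

/-- A node `v` is enabled in marking `M` if every in-arrow of `v` holds a token. -/
def Enabled (s t : A → V) (M : A → ℕ) (v : V) : Prop :=
  ∀ a : A, t a = v → 1 ≤ M a

/-- Firing node `v`: remove a token from each in-arrow, add one to each out-arrow. -/
noncomputable def fire (s t : A → V) (M : A → ℕ) (v : V) : A → ℕ :=
  fun a => M a - (if t a = v then 1 else 0) + (if s a = v then 1 else 0)

/-- One firing step between markings. -/
def Step (s t : A → V) (M M' : A → ℕ) : Prop :=
  ∃ v : V, Enabled s t M v ∧ M' = fire s t M v

/-- Reachability: final marking of some (possibly empty) firing sequence. -/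
def Reaches (s t : A → V) : (A → ℕ) → (A → ℕ) → Prop :=
  Relation.ReflTransGen (Step s t)

/-- A marking is live if from every reachable marking, every node can
eventually be enabled. -/
def Live (s t : A → V) (M : A → ℕ) : Prop :=
  ∀ (v : V) (M' : A → ℕ), Reaches s t M M' →
    ∃ M'' : A → ℕ, Reaches s t M' M'' ∧ Enabled s t M'' v

/-- A marking is safe if every reachable marking has at most one token per arrow. -/
def Safe (s t : A → V) (M : A → ℕ) : Prop :=
  ∀ M' : A → ℕ, Reaches s t M M' → ∀ a : A, M' a ≤ 1

/-- `ValidSeq s t M vs`: the list of nodes `vs` is a firing sequence from `M`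
(each node is enabled when it fires). -/
def ValidSeq (s t : A → V) : (A → ℕ) → List V → Prop
  | _, [] => True
  | M, v :: vs => Enabled s t M v ∧ ValidSeq s t (fire s t M v) vs

/-- The final marking of a firing sequence. -/
noncomputable def execute (s t : A → V) : (A → ℕ) → List V → (A → ℕ)
  | M, [] => M
  | M, v :: vs => execute s t (fire s t M v) vs

/-- There is an arrow from `v` to `w`. -/
def DirAdj (s t : A → V) (v w : V) : Prop := ∃ a : A, s a = v ∧ t a = w

theorem path_of_reach (s t : A → V) {v w : V}
    (h : Relation.ReflTransGen (DirAdj s t) v w) :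
    v = w ∨ ∃ p : List A, PathFrom s t v w p := by
  induction h using Relation.ReflTransGen.head_induction_on with
  | refl => exact Or.inl rfl
  | head h1 _ ih =>
    obtain ⟨a, rfl, rfl⟩ := h1
    right
    rcases ih with rfl | ⟨p, hc, hh, hl⟩
    · exact ⟨[a], List.isChain_singleton a, by simp, by simp⟩
    · cases p with
      | nil => simp at hh
      | cons b q =>
        refine ⟨a :: b :: q, List.isChain_cons_cons.2 ⟨?_, hc⟩, by simp, ?_⟩
        · simpa using hh.symm
        · simpa using hl

/-- Deleting the firings of nodes of a set `X` closed under successors. -/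
theorem project_run (s t : A → V) (X : V → Prop)
    (hX : ∀ a : A, X (s a) → X (t a)) {M N : A → ℕ} (h : Reaches s t M N) :
    ∃ N1, Reaches s t M N1 ∧ (∀ b : A, ¬ X (t b) → N1 b = N b) ∧
      (∀ b : A, X (t b) → M b ≤ N1 b) := by
  induction h with
  | refl => exact ⟨M, Relation.ReflTransGen.refl, fun _ _ => rfl, fun _ _ => le_rfl⟩
  | tail _ hstep ih =>
    obtain ⟨N1, hr, heq, hle⟩ := ih
    obtain ⟨w, hen, rfl⟩ := hstep
    by_cases hw : X w
    · refine ⟨N1, hr, fun b hb => ?_, hle⟩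
      have h1 : t b ≠ w := fun h => hb (h ▸ hw)
      have h2 : s b ≠ w := fun h => hb (hX b (h ▸ hw))
      simp [fire, h1, h2, heq b hb]
    · refine ⟨fire s t N1 w, hr.tail ⟨w, fun b hb => ?_, rfl⟩, fun b hb => ?_, fun b hb => ?_⟩
      · rw [heq b (hb ▸ hw)]
        exact hen b hb
      · simp only [fire, heq b hb]
      · have h1 : t b ≠ w := fun h => hw (h ▸ hb)
        have := hle b hb
        simp only [fire, h1, if_false]
        omega

theorem arrow_back (s t : A → V) (M : A → ℕ) (hlive : Live s t M) (hsafe : Safe s t M) (a : A) :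
    Relation.ReflTransGen (DirAdj s t) (t a) (s a) := by
  by_contra hn
  have hX : ∀ b : A, Relation.ReflTransGen (DirAdj s t) (t a) (s b) →
      Relation.ReflTransGen (DirAdj s t) (t a) (t b) := fun b hb => hb.tail ⟨b, rfl, rfl⟩
  have key : ∀ M', Reaches s t M M' → ∃ M'', Reaches s t M M'' ∧ M' a + 1 ≤ M'' a := by
    intro M' hM'
    obtain ⟨N, hN, hen⟩ := hlive (s a) M' hM'
    obtain ⟨N1, hr, heq, hle⟩ := project_run s t _ hX hN
    refine ⟨fire s t N1 (s a), (hM'.trans hr).tail ⟨s a, fun b hb => ?_, rfl⟩, ?_⟩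
    · rw [heq b (hb ▸ hn)]
      exact hen b hb
    · have h1 : t a ≠ s a := fun h => hn (h ▸ Relation.ReflTransGen.refl)
      have := hle a Relation.ReflTransGen.refl
      simp only [fire, h1, if_false, if_true]
      omega
  obtain ⟨M1, hr1, h1⟩ := key M Relation.ReflTransGen.refl
  obtain ⟨M2, hr2, h2⟩ := key M1 hr1
  have := hsafe M2 hr2 a
  omega

/-- A weakly connected directed multigraph (finite nonempty node
set, finite arrow set) admitting a live and safe marking is strongly connected. -/
theorem stmt_1 {V A : Type} [Fintype V] [Nonempty V] [Fintype A]
    (s t : A → V)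
    (hweak : WeaklyConnected s t)
    (M : A → ℕ) (hlive : Live s t M) (hsafe : Safe s t M) :
    StronglyConnected s t := by
  intro v w hne
  have h : Relation.ReflTransGen (DirAdj s t) v w := by
    have hw := hweak v w
    clear hne
    induction hw with
    | refl => exact Relation.ReflTransGen.refl
    | tail _ hstep ih =>
      obtain ⟨a, ⟨rfl, rfl⟩ | ⟨rfl, rfl⟩⟩ := hstep
      · exact ih.tail ⟨a, rfl, rfl⟩
      · exact ih.trans (arrow_back s t M hlive hsafe a)
  exact (path_of_reach s t h).resolve_left hne
end

section
/- Let G be a directed multigraph with finite nonempty node set and finite arrow set that admits a marking which is both live and safe. Then every arrow of G belongs to a directed circuit. -/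
open Classical

variable {V A : Type}

/-- One-step arrow relation on nodes. -/
def ArrowRel (s t : A → V) (v w : V) : Prop := ∃ b : A, s b = v ∧ t b = w

theorem path_of_reach_s2 (s t : A → V) {w u : V}
    (h : Relation.ReflTransGen (ArrowRel s t) w u) :
    ∀ a : A, t a = w → ∃ p : List A,
      List.IsChain (fun a b => t a = s b) (a :: p) ∧
      ((a :: p).map t).getLast? = some u := by
  induction h using Relation.ReflTransGen.head_induction_on with
  | refl => intro a ha; exact ⟨[], by simp, by simp [ha]⟩
  | head h1 _ ih =>
    intro a ha
    obtain ⟨b, hb1, hb2⟩ := h1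
    obtain ⟨p, hp1, hp2⟩ := ih b hb2
    refine ⟨b :: p, ?_, ?_⟩
    · rw [List.isChain_cons_cons]
      exact ⟨by rw [ha, hb1], hp1⟩
    · simpa [List.getLast?_cons_cons] using hp2

theorem simulate (s t : A → V) (P : V → Prop) (hP : ∀ b, P (t b) → P (s b))
    (a : A) (ha : ¬ P (t a)) {M M' : A → ℕ} (h : Reaches s t M M') (N : A → ℕ)
    (hN : ∀ b, P (t b) → N b = M b) :
    ∃ N', Reaches s t N N' ∧ (∀ b, P (t b) → N' b = M' b) ∧ N a ≤ N' a := by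
  unfold Reaches at h
  induction h with
  | refl => exact ⟨N, Relation.ReflTransGen.refl, hN, le_refl _⟩
  | tail _ h2 ih =>
    obtain ⟨N1, h3, h4, h5⟩ := ih
    obtain ⟨v, hv, rfl⟩ := h2
    by_cases hPv : P v
    · refine ⟨fire s t N1 v, h3.tail ⟨v, ?_, rfl⟩, ?_, ?_⟩
      · intro b hb
        rw [h4 b (hb ▸ hPv)]
        exact hv b hb
      · intro b hb
        simp only [fire, h4 b hb]
      · have : t a ≠ v := fun h => ha (h ▸ hPv)
        simp only [fire, if_neg this]
        omega
    · refine ⟨N1, h3, ?_, h5⟩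
      intro b hb
      have h6 : t b ≠ v := fun h => hPv (h ▸ hb)
      have h7 : s b ≠ v := fun h => hPv (h ▸ hP b hb)
      simp [fire, h6, h7, h4 b hb]

theorem pump (s t : A → V) (P : V → Prop) (hP : ∀ b, P (t b) → P (s b))
    (a : A) (ha : ¬ P (t a)) (hsa : P (s a)) {M : A → ℕ} (hlive : Live s t M)
    {N : A → ℕ} (h : Reaches s t M N) :
    ∃ N', Reaches s t M N' ∧ N a + 1 ≤ N' a := by
  obtain ⟨M1, h1, h2⟩ := hlive (s a) N h
  obtain ⟨N1, h3, h4, h5⟩ := simulate s t P hP a ha h1 N (fun _ _ => rfl)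
  refine ⟨fire s t N1 (s a), (h.trans h3).tail ⟨s a, ?_, rfl⟩, ?_⟩
  · intro b hb
    rw [h4 b (hb ▸ hsa)]
    exact h2 b hb
  · have : t a ≠ s a := fun h => ha (h ▸ hsa)
    simp only [fire, if_neg this, if_true]
    omega

/-- In a directed multigraph (finite nonempty node set, finite
arrow set) admitting a live and safe marking, every arrow belongs to a
directed circuit. -/
theorem stmt_2 {V A : Type} [Fintype V] [Nonempty V] [Fintype A]
    (s t : A → V)
    (M : A → ℕ) (hlive : Live s t M) (hsafe : Safe s t M) :
    ∀ a : A, ∃ p : List A, IsCircuit s t p ∧ a ∈ p := by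
  intro a
  by_cases h : Relation.ReflTransGen (ArrowRel s t) (t a) (s a)
  · obtain ⟨p, hp1, hp2⟩ := path_of_reach_s2 s t h a rfl
    exact ⟨a :: p, ⟨s a, hp1, by simp, hp2⟩, by simp⟩
  · exfalso
    have hP : ∀ b, Relation.ReflTransGen (ArrowRel s t) (t b) (s a) →
        Relation.ReflTransGen (ArrowRel s t) (s b) (s a) :=
      fun b hb => Relation.ReflTransGen.head ⟨b, rfl, rfl⟩ hb
    obtain ⟨N1, h1, h2⟩ := pump s t (fun v => Relation.ReflTransGen (ArrowRel s t) v (s a))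
      hP a h Relation.ReflTransGen.refl hlive (N := M) Relation.ReflTransGen.refl
    obtain ⟨N2, h3, h4⟩ := pump s t (fun v => Relation.ReflTransGen (ArrowRel s t) v (s a))
      hP a h Relation.ReflTransGen.refl hlive h1
    have := hsafe N2 h3 a
    omega
end

section
/- Let G be a directed multigraph with finite nonempty node set and finite arrow set. If G is strongly connected, then there exists a marking of G that is both live and safe. -/
open Classical

variable {V A : Type}

/-- Token-free adjacency. -/
def ZeroAdj (s t : A → V) (M : A → ℕ) (u v : V) : Prop :=
  ∃ a : A, s a = u ∧ t a = v ∧ M a = 0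

theorem zeroAdj_fire_source (s t : A → V) (M : A → ℕ) (u v x : V)
    (h : ZeroAdj s t (fire s t M u) v x) : v ≠ u := by
  obtain ⟨a, h1, h2, h3⟩ := h
  intro h
  simp [fire, h1, h] at h3

theorem zeroAdj_fire_old (s t : A → V) (M : A → ℕ) (u v x : V)
    (h : ZeroAdj s t (fire s t M u) v x) (hx : x ≠ u) : ZeroAdj s t M v x := by
  obtain ⟨a, h1, h2, h3⟩ := h
  refine ⟨a, h1, h2, ?_⟩
  subst h2
  simp [fire, hx] at h3
  exact h3.1

theorem wf_fire (s t : A → V) (M : A → ℕ) (u : V)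
    (h : WellFounded (ZeroAdj s t M)) : WellFounded (ZeroAdj s t (fire s t M u)) := by
  have key : ∀ v, v ≠ u → Acc (ZeroAdj s t (fire s t M u)) v := by
    intro v
    induction v using h.induction with
    | _ v ih =>
      intro hv
      refine Acc.intro _ fun y hy => ?_
      exact ih y (zeroAdj_fire_old s t M u y v hy hv) (zeroAdj_fire_source s t M u y v hy)
  refine ⟨fun v => ?_⟩
  refine Acc.intro _ fun y hy => key y (zeroAdj_fire_source s t M u y v hy)

theorem wf_reaches (s t : A → V) (M M' : A → ℕ) (hr : Reaches s t M M')
    (h : WellFounded (ZeroAdj s t M)) : WellFounded (ZeroAdj s t M') := by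
  induction hr with
  | refl => exact h
  | tail _ hs ih =>
    obtain ⟨v, _, rfl⟩ := hs
    exact wf_fire s t _ v ih

theorem exists_enabled [Finite V] (s t : A → V) (v : V) (n : ℕ) :
    ∀ M : A → ℕ, WellFounded (ZeroAdj s t M) →
      Set.ncard {x | Relation.TransGen (ZeroAdj s t M) x v} ≤ n →
      ∃ M'', Reaches s t M M'' ∧ Enabled s t M'' v := by
  induction n with
  | zero =>
    intro M _ hn
    refine ⟨M, Relation.ReflTransGen.refl, fun a ha => ?_⟩
    by_contra h0
    have h1 : s a ∈ {x | Relation.TransGen (ZeroAdj s t M) x v} :=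
      Relation.TransGen.single ⟨a, rfl, ha, by omega⟩
    have h2 := (Set.ncard_eq_zero (Set.toFinite _)).1 (Nat.le_zero.1 hn)
    rw [h2] at h1
    exact h1
  | succ n ih =>
    intro M hM hn
    by_cases hE : Enabled s t M v
    · exact ⟨M, Relation.ReflTransGen.refl, hE⟩
    have hne : {x | Relation.TransGen (ZeroAdj s t M) x v}.Nonempty := by
      unfold Enabled at hE
      push Not at hE
      obtain ⟨a, ha, h0⟩ := hE
      exact ⟨s a, Relation.TransGen.single ⟨a, rfl, ha, by omega⟩⟩
    obtain ⟨u, hu, hmin⟩ := hM.has_min _ hne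
    have huE : Enabled s t M u := by
      intro a ha
      by_contra h0
      have hz : ZeroAdj s t M (s a) u := ⟨a, rfl, ha, by omega⟩
      exact hmin (s a) (Relation.TransGen.head hz hu) hz
    have huv : v ≠ u := by
      rintro rfl
      exact hM.transGen.isIrrefl.irrefl _ hu
    have hsub : {x | Relation.TransGen (ZeroAdj s t (fire s t M u)) x v} ⊆
        {x | Relation.TransGen (ZeroAdj s t M) x v} \ {u} := by
      intro x hx
      have : Relation.TransGen (ZeroAdj s t M) x v ∧ x ≠ u := by
        induction hx using Relation.TransGen.head_induction_on with
        | single h =>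
          exact ⟨.single (zeroAdj_fire_old s t M u _ _ h huv),
            zeroAdj_fire_source s t M u _ _ h⟩
        | head h _ ih =>
          exact ⟨.head (zeroAdj_fire_old s t M u _ _ h ih.2) ih.1,
            zeroAdj_fire_source s t M u _ _ h⟩
      exact this
    have hc := Set.ncard_le_ncard hsub (Set.toFinite _)
    have hc2 := Set.ncard_diff_singleton_lt_of_mem hu (Set.toFinite _)
    obtain ⟨M'', hr, he⟩ := ih (fire s t M u) (wf_fire s t M u hM) (by omega)
    exact ⟨M'', Relation.ReflTransGen.head ⟨u, huE, rfl⟩ hr, he⟩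

theorem live_of_wf [Finite V] (s t : A → V) (M : A → ℕ)
    (h : WellFounded (ZeroAdj s t M)) : Live s t M := fun v M' hr =>
  exists_enabled s t v _ M' (wf_reaches s t M M' hr h) le_rfl

theorem path_flow [Fintype A] (s t : A → V) (p : List A) : ∀ v w : V, PathFrom s t v w p →
    ∃ f : A → ℕ, ∀ g : V → ℤ, ∑ b, (f b : ℤ) * (g (t b) - g (s b)) = g w - g v := by
  induction p with
  | nil => intro v w h; simp [PathFrom] at h
  | cons a p ih =>
    intro v w h
    obtain ⟨h1, h2, h3⟩ := h
    have h2' : s a = v := by simpa using h2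
    have single : ∀ g : V → ℤ,
        ∑ b, ((if b = a then 1 else 0 : ℕ) : ℤ) * (g (t b) - g (s b)) = g (t a) - g (s a) := by
      intro g; simp
    cases p with
    | nil =>
      have h3' : t a = w := by simpa using h3
      refine ⟨fun b => if b = a then 1 else 0, fun g => ?_⟩
      rw [single, h3', h2']
    | cons b p =>
      have h1' := List.isChain_cons_cons.1 h1
      obtain ⟨f, hf⟩ := ih (t a) w ⟨h1'.2, by simp [h1'.1], by
        simpa [List.getLast?_cons_cons] using h3⟩
      refine ⟨fun b => f b + if b = a then 1 else 0, fun g => ?_⟩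
      have e := single g
      have e' := hf g
      simp only [Nat.cast_add, add_mul, Finset.sum_add_distrib]
      rw [e, e', h2']
      ring

theorem exists_circulation [Fintype A] (s t : A → V) (hstrong : StronglyConnected s t) :
    ∃ w : A → ℕ, (∀ a, 1 ≤ w a) ∧
      ∀ g : V → ℤ, ∑ b, (w b : ℤ) * (g (t b) - g (s b)) = 0 := by
  have h : ∀ a : A, ∃ f : A → ℕ, ∀ g : V → ℤ,
      ∑ b, (f b : ℤ) * (g (t b) - g (s b)) = g (s a) - g (t a) := by
    intro a
    by_cases hl : t a = s a
    · exact ⟨fun _ => 0, fun g => by simp [hl]⟩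
    · obtain ⟨p, hp⟩ := hstrong _ _ hl
      exact path_flow s t p _ _ hp
  choose f hf using h
  refine ⟨fun b => 1 + ∑ a, f a b, fun a => Nat.le_add_right _ _, fun g => ?_⟩
  simp only [Nat.cast_add, Nat.cast_sum, Nat.cast_one, add_mul, one_mul,
    Finset.sum_add_distrib, Finset.sum_mul]
  rw [Finset.sum_comm (f := fun b a => (f a b : ℤ) * (g (t b) - g (s b)))]
  simp only [hf]
  rw [← Finset.sum_add_distrib]
  simp

theorem weight_reaches [Fintype A] (s t : A → V) (w : A → ℕ)
    (hw : ∀ g : V → ℤ, ∑ b, (w b : ℤ) * (g (t b) - g (s b)) = 0)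
    (M M' : A → ℕ) (hr : Reaches s t M M') :
    ∑ a, w a * M' a = ∑ a, w a * M a := by
  induction hr with
  | refl => rfl
  | @tail N N' _ hs ih =>
    obtain ⟨v, hE, rfl⟩ := hs
    rw [← ih]
    have h := hw (fun x => if x = v then 1 else 0)
    have key : ∀ a, (fire s t N v a : ℤ) =
        N a - ((if t a = v then 1 else 0) - (if s a = v then 1 else 0)) := by
      intro a
      have := hE a
      unfold fire
      split_ifs <;> simp_all
    zify
    simp only [key, mul_sub (w _ : ℤ) (N _ : ℤ), Finset.sum_sub_distrib]
    rw [h, sub_zero]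

/-- Every strongly connected directed multigraph (finite nonempty
node set, finite arrow set) admits a marking that is both live and safe. -/
theorem stmt_3 {V A : Type} [Fintype V] [Nonempty V] [Fintype A]
    (s t : A → V)
    (hstrong : StronglyConnected s t) :
    ∃ M : A → ℕ, Live s t M ∧ Safe s t M := by
  obtain ⟨w, hw1, hw⟩ := exists_circulation s t hstrong
  have hne : {M : A → ℕ | WellFounded (ZeroAdj s t M)}.Nonempty := by
    refine ⟨fun _ => 1, ⟨fun v => Acc.intro _ ?_⟩⟩
    rintro y ⟨a, _, _, h⟩
    simp at h
  obtain ⟨M, hM, hmin⟩ :=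
    (measure (fun M : A → ℕ => ∑ a, w a * M a)).wf.has_min _ hne
  refine ⟨M, live_of_wf s t M hM, fun M' hr a => ?_⟩
  by_contra ha
  have hM' := wf_reaches s t M M' hr hM
  refine hmin (Function.update M' a 1) ?_ ?_
  · refine Subrelation.wf ?_ hM'
    rintro x y ⟨b, h1, h2, h3⟩
    refine ⟨b, h1, h2, ?_⟩
    by_cases hb : b = a
    · subst hb; simp at h3
    · simpa [hb] using h3
  · change ∑ b, w b * Function.update M' a 1 b < ∑ b, w b * M b
    rw [← weight_reaches s t w hw M M' hr]
    refine Finset.sum_lt_sum (fun b _ => ?_) ⟨a, Finset.mem_univ _, ?_⟩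
    · refine Nat.mul_le_mul_left _ ?_
      by_cases hb : b = a
      · subst hb; simp; omega
      · simp [hb]
    · simp only [Function.update_self]
      exact Nat.mul_lt_mul_of_pos_left (by omega) (hw1 a)
end

section
/- Let G be a directed multigraph with finite nonempty node set and finite arrow set, let M be a marking of G that is both live and safe, and let v₁,…,vₙ (with markings M = M₀, M₁, …, Mₙ) be a firing sequence from M. Suppose node v fires at positions i and j of the sequence with i < j and with no occurrence of v at any position strictly between i and j. Then for every node w ≠ v such that there is at least one arrow a with s(a) = w and t(a) = v, the node w occurs exactly once among the positions strictly between i and j. -/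
open Classical

variable {V A : Type}

theorem exists_markings (s t : A → V) (vs : List V) : ∀ (M : A → ℕ), ValidSeq s t M vs →
    ∃ N : ℕ → A → ℕ, N 0 = M ∧ ∀ k u, vs[k]? = some u →
      Enabled s t (N k) u ∧ N (k + 1) = fire s t (N k) u := by
  induction vs with
  | nil => intro M _; exact ⟨fun _ => M, rfl, by simp⟩
  | cons x xs ih =>
    intro M h
    obtain ⟨N, h0, hN⟩ := ih _ h.2
    refine ⟨fun k => Nat.casesOn k M N, rfl, ?_⟩
    intro k u hk
    cases k with
    | zero =>
      simp at hk
      subst hk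
      exact ⟨h.1, h0⟩
    | succ k => exact hN k u (by simpa using hk)

/-- In a firing sequence from a live and safe marking, between two
consecutive firings of a node `v` (positions `i < j`, no `v` strictly between),
every node `w ≠ v` that has an arrow into `v` fires exactly once strictly
between positions `i` and `j`. -/
theorem stmt_4 {V A : Type} [Fintype V] [Nonempty V] [Fintype A]
    (s t : A → V)
    (M : A → ℕ) (hlive : Live s t M) (hsafe : Safe s t M)
    (vs : List V) (hseq : ValidSeq s t M vs)
    (v : V) (i j : ℕ) (hij : i < j) (hjlen : j < vs.length)
    (hvi : vs[i]? = some v) (hvj : vs[j]? = some v)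
    (hmid : ∀ k : ℕ, i < k → k < j → vs[k]? ≠ some v)
    (w : V) (hwv : w ≠ v) (harrow : ∃ a : A, s a = w ∧ t a = v) :
    ((Finset.Ioo i j).filter (fun k => vs[k]? = some w)).card = 1 := by
  obtain ⟨a, hsa, hta⟩ := harrow
  obtain ⟨N, h0, hN⟩ := exists_markings s t vs M hseq
  have hreach : ∀ k, k ≤ vs.length → Reaches s t M (N k) := by
    intro k
    induction k with
    | zero => intro _; rw [h0]; exact Relation.ReflTransGen.refl
    | succ k ih =>
      intro hk
      have h := hN k vs[k] (List.getElem?_eq_getElem (by omega))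
      exact (ih (by omega)).tail ⟨_, h.1, h.2⟩
  have hcount : ∀ d, i + 1 + d ≤ j →
      N (i + 1 + d) a = ((Finset.Ioo i (i + 1 + d)).filter (fun k => vs[k]? = some w)).card := by
    intro d
    induction d with
    | zero =>
      intro _
      have h1 := hsafe _ (hreach i (by omega)) a
      have h2 := (hN i v hvi).2
      have he : Finset.Ioo i (i + 1 + 0) = ∅ := by
        ext x; simp
      rw [he]
      simp [h2, fire, hta, hsa, hwv]
      omega
    | succ d ih =>
      intro hd
      have ih := ih (by omega)
      have hu : vs[i + 1 + d]? = some vs[i + 1 + d] := List.getElem?_eq_getElem (by omega)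
      have h2 := (hN _ _ hu).2
      have hne : v ≠ vs[i + 1 + d] := by
        intro h
        exact hmid (i + 1 + d) (by omega) (by omega) (by rw [hu, ← h])
      have he : Finset.Ioo i (i + 1 + (d + 1)) = insert (i + 1 + d) (Finset.Ioo i (i + 1 + d)) := by
        ext x; simp; omega
      have h3 : N (i + 1 + (d + 1)) a
          = N (i + 1 + d) a + (if w = vs[i + 1 + d] then 1 else 0) := by
        rw [show i + 1 + (d + 1) = i + 1 + d + 1 by omega]
        have := congrFun h2 a
        simpa [fire, hta, hsa, hne] using this
      rw [h3, ih, he, Finset.filter_insert]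
      by_cases hw : w = vs[i + 1 + d]
      · rw [if_pos hw, if_pos (by rw [hu, ← hw]), Finset.card_insert_of_notMem (by simp)]
      · rw [if_neg hw, if_neg (by rw [hu]; intro h; exact hw (Option.some.inj h).symm)]
        rfl
  have h1 := hcount (j - (i + 1)) (by omega)
  rw [show i + 1 + (j - (i + 1)) = j by omega] at h1
  have h2 := (hN j v hvj).1 a hta
  have h3 := hsafe _ (hreach j (by omega)) a
  rw [← h1]
  omega
end

section
/- Let G be a directed multigraph with finite nonempty node set and finite arrow set, let M be a marking of G that is both live and safe, and let v₁,…,vₙ (with markings M = M₀, M₁, …, Mₙ) be a firing sequence from M. Suppose node v fires at positions i and j of the sequence with i < j and with no occurrence of v at any position strictly between i and j. Then for every node u ≠ v such that there is at least one arrow a with s(a) = v and t(a) = u, the node u occurs at least once among the positions strictly between i and j. -/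
open Classical

variable {V A : Type}

theorem aux_step {V A : Type} (s t : A → V) : ∀ (vs : List V) (M : A → ℕ) (k : ℕ) (w : V),
    vs[k]? = some w →
    execute s t M (vs.take (k+1)) = fire s t (execute s t M (vs.take k)) w := by
  intro vs
  induction vs with
  | nil => intro M k w h; simp at h
  | cons x xs ih =>
    intro M k w h
    cases k with
    | zero =>
      simp at h
      subst h
      simp [execute]
    | succ k =>
      simp only [List.getElem?_cons_succ] at h
      simpa [execute] using ih (fire s t M x) k w h

theorem aux_reach {V A : Type} (s t : A → V) : ∀ (vs : List V) (M : A → ℕ) (k : ℕ),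
    ValidSeq s t M vs → Reaches s t M (execute s t M (vs.take k)) := by
  intro vs
  induction vs with
  | nil => intro M k _; simpa [execute, Reaches] using Relation.ReflTransGen.refl
  | cons x xs ih =>
    intro M k h
    cases k with
    | zero => simpa [execute, Reaches] using Relation.ReflTransGen.refl
    | succ k =>
      simp only [List.take_succ_cons, execute]
      exact Relation.ReflTransGen.head ⟨x, h.1, rfl⟩ (ih _ k h.2)

/-- In a firing sequence from a live and safe marking, between two
consecutive firings of a node `v` (positions `i < j`, no `v` strictly between),
every node `u ≠ v` that `v` has an arrow into fires at least once strictly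
between positions `i` and `j`. -/
theorem stmt_5 {V A : Type} [Fintype V] [Nonempty V] [Fintype A]
    (s t : A → V)
    (M : A → ℕ) (hlive : Live s t M) (hsafe : Safe s t M)
    (vs : List V) (hseq : ValidSeq s t M vs)
    (v : V) (i j : ℕ) (hij : i < j) (hjlen : j < vs.length)
    (hvi : vs[i]? = some v) (hvj : vs[j]? = some v)
    (hmid : ∀ k : ℕ, i < k → k < j → vs[k]? ≠ some v)
    (u : V) (huv : u ≠ v) (harrow : ∃ a : A, s a = v ∧ t a = u) :
    1 ≤ ((Finset.Ioo i j).filter (fun k => vs[k]? = some u)).card := by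
  obtain ⟨a, hsa, hta⟩ := harrow
  by_contra hcon
  have hnou : ∀ k, i < k → k < j → vs[k]? ≠ some u := by
    intro k h1 h2 h3
    apply hcon
    exact Finset.card_pos.mpr ⟨k, by simp [h1, h2, h3]⟩
  have hvfire : ∀ N : A → ℕ, fire s t N v a = N a + 1 := by
    intro N
    simp [fire, hsa, hta, huv]
  have key : ∀ k, i + 1 ≤ k → k ≤ j → 1 ≤ execute s t M (vs.take k) a := by
    intro k hk
    induction k, hk using Nat.le_induction with
    | base =>
      intro _
      rw [aux_step s t vs M i v hvi, hvfire]
      omega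
    | succ k hk ih =>
      intro hkj
      have h1 := ih (by omega)
      have hk' : k < vs.length := by omega
      have hget : vs[k]? = some vs[k] := List.getElem?_eq_getElem hk'
      have hne : u ≠ vs[k] := by
        intro h
        exact hnou k (by omega) (by omega) (by rw [hget, h])
      rw [aux_step s t vs M k _ hget]
      simp only [fire, hta, if_neg hne]
      omega
  have h1 := key j hij le_rfl
  have h2 := hsafe _ (aux_reach s t vs M (j+1) hseq) a
  rw [aux_step s t vs M j v hvj, hvfire] at h2
  omega
end

section
/- Let G be a directed multigraph with finite nonempty node set and finite arrow set, and let M be a live marking of G. Then there exists a firing sequence from M whose final marking is again M and in which every node of G occurs exactly once. -/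
open Classical

variable {V A : Type}

theorem fire_add (s t : A → V) (M : A → ℕ) (v : V) (h : Enabled s t M v) (a : A) :
    fire s t M v a + (if t a = v then 1 else 0) = M a + (if s a = v then 1 else 0) := by
  have := h a
  unfold fire
  split_ifs with h1 h2 <;> simp_all <;> omega

theorem execute_add (s t : A → V) (vs : List V) : ∀ (M : A → ℕ), ValidSeq s t M vs → ∀ a : A,
    execute s t M vs a + vs.count (t a) = M a + vs.count (s a) := by
  induction vs with
  | nil => intro M _ a; simp [execute]
  | cons v vs ih =>
    intro M hM a
    have h1 := ih _ hM.2 a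
    have h2 := fire_add s t M v hM.1 a
    simp only [execute, List.count_cons, beq_iff_eq, eq_comm (a := v)]
    omega

theorem reaches_execute (s t : A → V) (vs : List V) : ∀ (M : A → ℕ), ValidSeq s t M vs →
    Reaches s t M (execute s t M vs) := by
  induction vs with
  | nil => intro M _; exact Relation.ReflTransGen.refl
  | cons v vs ih =>
    intro M hM
    exact Relation.ReflTransGen.head ⟨v, hM.1, rfl⟩ (ih _ hM.2)

theorem validSeq_snoc (s t : A → V) (v : V) (vs : List V) : ∀ (M : A → ℕ), ValidSeq s t M vs →
    Enabled s t (execute s t M vs) v → ValidSeq s t M (vs ++ [v]) := by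
  induction vs with
  | nil => intro M _ h; exact ⟨h, trivial⟩
  | cons w vs ih => intro M hM h; exact ⟨hM.1, ih _ hM.2 h⟩

/-- If every node outside `S` has an empty in-arrow coming from outside `S`, this persists. -/
theorem blocked_reaches (s t : A → V) (S : Set V) (M M' : A → ℕ) (h : Reaches s t M M')
    (hM : ∀ v, v ∉ S → ∃ a, t a = v ∧ s a ∉ S ∧ M a = 0) :
    ∀ v, v ∉ S → ∃ a, t a = v ∧ s a ∉ S ∧ M' a = 0 := by
  induction h with
  | refl => exact hM
  | tail _ hs ih =>
    obtain ⟨u, hu, rfl⟩ := hs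
    intro v hv
    obtain ⟨a, ha, hsa, h0⟩ := ih v hv
    have huS : u ∈ S := by
      by_contra hc
      obtain ⟨b, hb, -, hb0⟩ := ih u hc
      have := hu b hb
      omega
    refine ⟨a, ha, hsa, ?_⟩
    have h2 : s a ≠ u := fun e => hsa (e ▸ huS)
    simp [fire, h0, h2]

theorem exists_seq [Fintype V] (s t : A → V) (M : A → ℕ) (hlive : Live s t M) (n : ℕ)
    (hn : n ≤ Fintype.card V) :
    ∃ vs : List V, ValidSeq s t M vs ∧ vs.Nodup ∧ vs.length = n := by
  induction n with
  | zero => exact ⟨[], trivial, List.nodup_nil, rfl⟩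
  | succ n ih =>
    obtain ⟨vs, hv, hnd, hl⟩ := ih (by omega)
    have key : ∃ v, v ∉ vs ∧ Enabled s t (execute s t M vs) v := by
      by_contra hc
      push Not at hc
      have hb : ∀ v, v ∉ {x | x ∈ vs} →
          ∃ a, t a = v ∧ s a ∉ {x | x ∈ vs} ∧ execute s t M vs a = 0 := by
        intro v hvs
        have := hc v hvs
        unfold Enabled at this
        push Not at this
        obtain ⟨a, ha, h0⟩ := this
        refine ⟨a, ha, ?_, by omega⟩
        intro hs
        have h1 := execute_add s t vs M hv a
        have h2 : vs.count (t a) = 0 := List.count_eq_zero.2 (by rw [ha]; exact hvs)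
        have h3 : 0 < vs.count (s a) := List.count_pos_iff.2 hs
        omega
      obtain ⟨w, hw⟩ : ∃ w, w ∉ vs := by
        by_contra hall
        push Not at hall
        have : Fintype.card V ≤ vs.toFinset.card := by
          rw [← Finset.card_univ]
          exact Finset.card_le_card (fun x _ => List.mem_toFinset.2 (hall x))
        have := List.toFinset_card_le vs
        omega
      obtain ⟨M'', hr, he⟩ := hlive w _ (reaches_execute s t vs M hv)
      obtain ⟨a, ha, -, h0⟩ := blocked_reaches s t _ _ _ hr hb w hw
      have := he a ha
      omega
    obtain ⟨v, hvn, he⟩ := key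
    refine ⟨vs ++ [v], validSeq_snoc s t v vs M hv he, ?_, by simp [hl]⟩
    rw [List.nodup_append]
    refine ⟨hnd, List.nodup_singleton v, ?_⟩
    intro a ha b hb
    rw [List.mem_singleton] at hb
    rintro rfl
    exact hvn (hb ▸ ha)

/-- For every live marking `M` of a directed multigraph (finite
nonempty node set, finite arrow set) there is a firing sequence from `M` back
to `M` in which every node occurs exactly once. -/
theorem stmt_6 {V A : Type} [Fintype V] [Nonempty V] [Fintype A]
    (s t : A → V)
    (M : A → ℕ) (hlive : Live s t M) :
    ∃ vs : List V, ValidSeq s t M vs ∧ execute s t M vs = M ∧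
      ∀ v : V, vs.count v = 1 := by
  obtain ⟨vs, hv, hnd, hl⟩ := exists_seq s t M hlive _ le_rfl
  have hmem : ∀ v, v ∈ vs := by
    intro v
    have h1 : vs.toFinset = Finset.univ := by
      rw [← Finset.card_eq_iff_eq_univ, List.toFinset_card_of_nodup hnd, hl]
    exact List.mem_toFinset.1 (h1 ▸ Finset.mem_univ v)
  have hc : ∀ v, vs.count v = 1 := fun v => List.count_eq_one_of_mem hnd (hmem v)
  refine ⟨vs, hv, ?_, hc⟩
  funext a
  have := execute_add s t vs M hv a
  rw [hc, hc] at this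
  omega
end

section
/- Let G be a directed multigraph with finite nonempty node set and finite arrow set, let C = (a₁,…,aₖ) be a directed cycle in G, let M₀ be a marking of G, and let M be any marking reachable from M₀. Then the total token count of C is invariant: Σᵢ M(aᵢ) = Σᵢ M₀(aᵢ). -/
open Classical

variable {V A : Type}

/-- A directed cycle: a circuit with pairwise distinct arrows and pairwise
distinct nodes. -/
def IsCycle (s t : A → V) (p : List A) : Prop :=
  IsCircuit s t p ∧ p.Nodup ∧ (p.map s).Nodup

theorem path_sum_aux {V A : Type} (s t : A → V) (f : V → ℕ) (w : V) (p : List A) :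
    ∀ v : V, PathFrom s t v w p →
      (p.map (fun a => f (s a))).sum + f w = (p.map (fun a => f (t a))).sum + f v := by
  induction p with
  | nil =>
    rintro v ⟨_, h, _⟩
    simp at h
  | cons a q ih =>
    rintro v ⟨hc, hv, hw⟩
    simp only [List.map_cons, List.head?_cons, Option.some.injEq] at hv
    subst hv
    cases q with
    | nil =>
      simp at hw
      subst hw
      simp [Nat.add_comm]
    | cons b r =>
      have hc' : t a = s b ∧ List.IsChain (fun a b => t a = s b) (b :: r) :=
        List.isChain_cons_cons.mp hc
      have hw' : ((b :: r).map t).getLast? = some w := by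
        simpa [List.getLast?_cons_cons] using hw
      have := ih (s b) ⟨hc'.2, by simp, hw'⟩
      rw [List.map_cons, List.sum_cons, List.map_cons (l := b :: r), List.sum_cons, hc'.1]
      omega

theorem fire_sum_aux {V A : Type} (s t : A → V) (M : A → ℕ) (v : V)
    (hen : Enabled s t M v) (p : List A) :
    (p.map (fire s t M v)).sum + (p.map (fun a => if t a = v then 1 else 0)).sum =
      (p.map M).sum + (p.map (fun a => if s a = v then 1 else 0)).sum := by
  induction p with
  | nil => simp
  | cons a q ih =>
    simp only [List.map_cons, List.sum_cons]
    have h : fire s t M v a + (if t a = v then 1 else 0) =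
        M a + (if s a = v then 1 else 0) := by
      have := hen a
      unfold fire
      by_cases h1 : t a = v
      · have := this h1
        simp only [h1, if_true]
        omega
      · simp [h1]
    omega

/-- The total token count on a directed cycle is invariant under
reachability. -/
theorem stmt_8 {V A : Type} [Fintype V] [Nonempty V] [Fintype A]
    (s t : A → V)
    (p : List A) (hcyc : IsCycle s t p)
    (M₀ M : A → ℕ) (hreach : Reaches s t M₀ M) :
    (p.map M).sum = (p.map M₀).sum := by
  obtain ⟨⟨v, hp⟩, -, -⟩ := hcyc
  induction hreach with
  | refl => rfl
  | tail _ hstep ih =>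
    obtain ⟨u, hen, rfl⟩ := hstep
    have h1 := path_sum_aux s t (fun x => if x = u then 1 else 0) v p v hp
    have h2 := fire_sum_aux s t _ u hen p
    omega
end

section
/- Let G be a directed multigraph with finite nonempty node set and finite arrow set, let M₀ be a safe marking of G with M₀(a) ≤ 1 for all arrows a, and let v₁,…,vₙ together with markings M₀, M₁, …, Mₙ be a firing sequence from M₀. Then for every arrow a with s(a) ≠ t(a), the number of indices i with vᵢ = s(a) and the number of indices i with vᵢ = t(a) differ by at most 1. -/
open Classical

variable {V A : Type}

theorem execute_balance_aux (s t : A → V) (a : A) (vs : List V) :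
    ∀ M : A → ℕ, ValidSeq s t M vs →
      Reaches s t M (execute s t M vs) ∧
      (execute s t M vs a : ℤ) = M a + (vs.count (s a) : ℤ) - (vs.count (t a) : ℤ) := by
  induction vs with
  | nil =>
    intro M _
    exact ⟨Relation.ReflTransGen.refl, by simp [execute]⟩
  | cons v vs ih =>
    intro M h
    obtain ⟨hv, hs⟩ := h
    obtain ⟨h1, h2⟩ := ih _ hs
    refine ⟨Relation.ReflTransGen.head ⟨v, hv, rfl⟩ h1, ?_⟩
    have hva := hv a
    simp only [execute]
    rw [h2]
    simp only [fire, List.count_cons, beq_iff_eq, eq_comm (a := v)]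
    split_ifs with h3 h4 h4
    · have := hva h3
      push_cast
      omega
    · have := hva h3
      push_cast
      omega
    · push_cast
      omega
    · push_cast
      omega

/-- Along any firing sequence from a safe marking with at most one
token per arrow, for every non-loop arrow `a` the numbers of firings of its
source and of its target differ by at most 1. -/
theorem stmt_9 {V A : Type} [Fintype V] [Nonempty V] [Fintype A]
    (s t : A → V)
    (M₀ : A → ℕ) (hsafe : Safe s t M₀) (hM₀ : ∀ a : A, M₀ a ≤ 1)
    (vs : List V) (hseq : ValidSeq s t M₀ vs)
    (a : A) (hne : s a ≠ t a) :
    |(vs.count (s a) : ℤ) - (vs.count (t a) : ℤ)| ≤ 1 := by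
  obtain ⟨h1, h2⟩ := execute_balance_aux s t a vs M₀ hseq
  have h3 := hsafe _ h1 a
  have h4 := hM₀ a
  rw [abs_le]
  constructor <;> omega
end
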